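/- arXiv:math/0611265 — 3 statements merged into one kernel-verified Lean document; each statement's English description precedes it below -/
import Mathlib

section
/- Fix q ∈ [0,1], m ∈ ℕ and m₀ ≤ m with γ = m₀/m ∈ (0,1]. For any [0,1]-valued random variables X₁,…,X_m and the Benjamini–Hochberg procedure, for all k, l ∈ ℕ: E[(Π_{3,m})^l] ≤ (1 − γ)^l + E[(Π_{1,m})^k] / γ^k. -/
/-!
The inequality holds pointwise before taking expectations. The one structural fact about the
Benjamini–Hochberg procedure is that exactly `R` observations lie below the final threshold
`q R / m` (`count_threshold`): at least `R` do by definition, and if `N > R` did, then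
`X_{N:m} ≤ q R / m ≤ q N / m` would contradict maximality of `R`. Splitting the observations into
the first `m₀` and the others gives `S ≤ R` and `m₀ - S ≤ m - R`, so `Π₁, Π₃ ∈ [0, 1]`.

Write `γ = m₀ / m`. If `Π₁ ≥ γ`, then `Π₃ ^ l ≤ 1 ≤ (Π₁ / γ) ^ k`. If `Π₁ < γ`, then `S ≤ γ R`,
hence `m₀ - S ≥ γ (m - R)` and `Π₃ ≤ 1 - γ`. Integrating requires `Π₁` and `Π₃` to be measurable,
which follows from expressing `R` through the counts `#{i | X_i ≤ q r / m}` (`BHR_eq_sup`).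
-/

open MeasureTheory ProbabilityTheory Filter Finset Topology

noncomputable section

/-- `orderStat x ⟨i-1, _⟩` is the `i`-th order statistic `X_{i:m}` of the tuple `x`. -/
def orderStat {m : ℕ} (x : Fin m → ℝ) : Fin m → ℝ := x ∘ Tuple.sort x

/-- Number of rejections of the modified Benjamini–Hochberg procedure with thresholds
`q * (i + j) / m`, applied to a tuple of `n` values:
`max {i : X_{i:n} ≤ q (i+j)/m}` (`0` if no such `i` exists). -/
def BHRmod (q : ℝ) (m j : ℕ) {n : ℕ} (x : Fin n → ℝ) : ℕ :=
  sSup {i : ℕ | ∃ hi : i - 1 < n, 1 ≤ i ∧ orderStat x ⟨i - 1, hi⟩ ≤ q * (i + j) / m}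

/-- `R_m`, the number of rejections of the Benjamini–Hochberg procedure:
`max {i : X_{i:m} ≤ q i/m}` (`0` if no such `i` exists). -/
def BHR (q : ℝ) {m : ℕ} (x : Fin m → ℝ) : ℕ := BHRmod q m 0 x

/-- The tuple `X^{(j)} = (x_{j+1}, …, x_m)`. -/
def tailTuple {m : ℕ} (j : ℕ) (x : Fin m → ℝ) : Fin (m - j) → ℝ :=
  fun i => x ⟨j + i.1, by have := i.2; omega⟩

/-- `R_m^{(j)}(X^{(j)})`: the number of rejections of the modified Benjamini–Hochberg
procedure (with `i` replaced by `i + j` in the thresholds) applied to `X^{(j)}`. -/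
def BHRj (q : ℝ) {m : ℕ} (j : ℕ) (x : Fin m → ℝ) : ℕ := BHRmod q m j (tailTuple j x)

/-- `S_m`, the number of rejected observations among the first `m₀` ones, i.e. those
`x i ≤ q R_m / m` with `i < m₀`. -/
def BHS (q : ℝ) {m : ℕ} (m0 : ℕ) (x : Fin m → ℝ) : ℕ :=
  (univ.filter fun i : Fin m => i.1 < m0 ∧ x i ≤ q * (BHR q x) / m).card

/-- `Π_{1,m} = S_m / (R_m ∨ 1)`, the proportion of incorrect rejections. -/
def Pi1 (q : ℝ) {m : ℕ} (m0 : ℕ) (x : Fin m → ℝ) : ℝ :=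
  (BHS q m0 x : ℝ) / ((max (BHR q x) 1 : ℕ) : ℝ)

/-- `Π_{2,m} = (R_m - S_m)/m₁`, the proportion of correct rejections out of `m₁ = m - m₀`. -/
def Pi2 (q : ℝ) {m : ℕ} (m0 : ℕ) (x : Fin m → ℝ) : ℝ :=
  ((BHR q x : ℝ) - (BHS q m0 x : ℝ)) / ((m - m0 : ℕ) : ℝ)

/-- `Π_{3,m} = 1 - (m₀ - S_m)/((m - R_m) ∨ 1)`. -/
def Pi3 (q : ℝ) {m : ℕ} (m0 : ℕ) (x : Fin m → ℝ) : ℝ :=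
  1 - ((m0 : ℝ) - (BHS q m0 x : ℝ)) / ((max (m - BHR q x) 1 : ℕ) : ℝ)

/-- Empirical distribution function `F_{m₀}` of the first `m₀` coordinates. -/
def ecdfFirst {m : ℕ} (m0 : ℕ) (x : Fin m → ℝ) (t : ℝ) : ℝ :=
  ((univ.filter fun i : Fin m => i.1 < m0 ∧ x i ≤ t).card : ℝ) / (m0 : ℝ)

/-- Empirical distribution function `G_{m₁}` of the last `m₁ = m - m₀` coordinates. -/
def ecdfLast {m : ℕ} (m0 : ℕ) (x : Fin m → ℝ) (t : ℝ) : ℝ :=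
  ((univ.filter fun i : Fin m => m0 ≤ i.1 ∧ x i ≤ t).card : ℝ) / ((m - m0 : ℕ) : ℝ)

/-- Empirical distribution function `H_m` of all `m` coordinates. -/
def ecdfAll {m : ℕ} (x : Fin m → ℝ) (t : ℝ) : ℝ :=
  ((univ.filter fun i : Fin m => x i ≤ t).card : ℝ) / (m : ℝ)

/-- A distribution function concentrated on `[0,1]`. -/
structure IsDF01 (G : ℝ → ℝ) : Prop where
  mono : Monotone G
  right_cont : ∀ t, ContinuousWithinAt G (Set.Ici t) t
  zero : ∀ t < (0 : ℝ), G t = 0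
  one : ∀ t, (1 : ℝ) ≤ t → G t = 1

/-- `ψ_q(x) = sup_{qx ≤ t ≤ q} (G(t) - t)/t`. -/
def psiBH (q : ℝ) (G : ℝ → ℝ) (x : ℝ) : ℝ :=
  ⨆ t : Set.Icc (q * x) q, (G t - (t : ℝ)) / (t : ℝ)

/-- `ψ̲_q⋆(y) = min {x ∈ [0,1] : ψ_q(x) ≤ 1/y}`. -/
def psiLow (q : ℝ) (G : ℝ → ℝ) (y : ℝ) : ℝ :=
  sInf {x : ℝ | x ∈ Set.Icc (0 : ℝ) 1 ∧ psiBH q G x ≤ 1 / y}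

/-- `ψ̄_q⋆(y) = inf {x ∈ [0,1] : ψ_q(x) < 1/y}`. -/
def psiHigh (q : ℝ) (G : ℝ → ℝ) (y : ℝ) : ℝ :=
  sInf {x : ℝ | x ∈ Set.Icc (0 : ℝ) 1 ∧ psiBH q G x < 1 / y}

/-- `κ(x) = min_{0 ≤ t ≤ x} (1 - G(t))/(1 - t)`. -/
def kappaBH (G : ℝ → ℝ) (x : ℝ) : ℝ :=
  ⨅ t : Set.Icc (0 : ℝ) x, (1 - G t) / (1 - (t : ℝ))

/-- Storey-type estimator `γ_m(x) = min_{0 ≤ t ≤ x} (1 - H_m(t))/(1 - t)`. -/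
def gammaEst {m : ℕ} (xs : Fin m → ℝ) (x : ℝ) : ℝ :=
  ⨅ t : Set.Icc (0 : ℝ) x, (1 - ecdfAll xs t) / (1 - (t : ℝ))

/-- A real-valued sequence of statistics converges to `c` in probability. -/
def TendstoInProb {Ω : Type*} [MeasureSpace Ω] (f : ℕ → Ω → ℝ) (c : ℝ) : Prop :=
  ∀ ε > (0 : ℝ), Tendsto (fun n => ℙ {ω | ε ≤ |f n ω - c|}) atTop (𝓝 0)

/-- A sequence of ℕ-valued statistics tends to `∞` in probability. -/
def TendstoInProbAtTop {Ω : Type*} [MeasureSpace Ω] (f : ℕ → Ω → ℕ) : Prop :=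
  ∀ C : ℕ, Tendsto (fun n => ℙ {ω | f n ω ≤ C}) atTop (𝓝 0)

/-- Uniform (over `[0,1]`) convergence in probability of random functions `F n` to `L`. -/
def UnifConvInProb {Ω : Type*} [MeasureSpace Ω] (F : ℕ → Ω → ℝ → ℝ) (L : ℝ → ℝ) : Prop :=
  ∀ ε > (0 : ℝ),
    Tendsto (fun n => ℙ {ω | ε ≤ ⨆ t : Set.Icc (0 : ℝ) 1, |F n ω t - L t|}) atTop (𝓝 0)

end

namespace BHMoment

/-! ### The rejection threshold -/

/-- The number of coordinates of `x` that are at most `t`. -/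
noncomputable def count {m : ℕ} (x : Fin m → ℝ) (t : ℝ) : ℕ := (univ.filter fun i => x i ≤ t).card

lemma count_le {m : ℕ} (x : Fin m → ℝ) (t : ℝ) : count x t ≤ m := by
  simpa [count] using card_filter_le (univ : Finset (Fin m)) (fun i => x i ≤ t)

lemma count_orderStat {m : ℕ} (x : Fin m → ℝ) (t : ℝ) : count (orderStat x) t = count x t := by
  unfold count orderStat
  refine card_equiv (Tuple.sort x) fun i => ?_
  simp

/-- Links order statistics to counts: `X_{j+1:m} ≤ t` iff more than `j` observations are at most
`t`. -/
lemma orderStat_le_iff {m : ℕ} (x : Fin m → ℝ) (t : ℝ) (j : Fin m) :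
    orderStat x j ≤ t ↔ j.1 < count x t := by
  have hmono : Monotone (orderStat x) := Tuple.monotone_sort x
  rw [← count_orderStat]
  constructor
  · intro h
    have : (Finset.Iic j).card ≤ count (orderStat x) t :=
      card_le_card fun i hi => by
        simpa using (hmono (Finset.mem_Iic.1 hi)).trans h
    rw [Fin.card_Iic] at this
    omega
  · intro h
    by_contra! hlt
    have : count (orderStat x) t ≤ (Finset.Iio j).card :=
      card_le_card fun i hi => by
        rw [Finset.mem_Iio]
        by_contra! hji
        exact absurd (hlt.trans_le (hmono hji)) (not_lt.2 (by simpa using hi))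
    rw [Fin.card_Iio] at this
    omega

/-- The index set whose supremum defines `R`, in terms of counts. -/
lemma BHR_eq_sSup (q : ℝ) {m : ℕ} (x : Fin m → ℝ) :
    BHR q x = sSup {r : ℕ | 1 ≤ r ∧ r ≤ count x (q * r / m)} := by
  unfold BHR BHRmod
  congr 1
  ext r
  simp only [Set.mem_ofPred_eq, orderStat_le_iff, Nat.cast_zero, add_zero]
  have := count_le x (q * r / m)
  constructor
  · rintro ⟨_, h1, h2⟩
    omega
  · rintro ⟨h1, h2⟩
    exact ⟨by omega, h1, by omega⟩

lemma bddAbove_index (q : ℝ) {m : ℕ} (x : Fin m → ℝ) :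
    BddAbove {r : ℕ | 1 ≤ r ∧ r ≤ count x (q * r / m)} :=
  ⟨m, fun _ hr => hr.2.trans (count_le _ _)⟩

lemma le_BHR (q : ℝ) {m : ℕ} (x : Fin m → ℝ) {r : ℕ} (h : r ≤ count x (q * r / m)) :
    r ≤ BHR q x := by
  rcases Nat.eq_zero_or_pos r with rfl | hr
  · exact Nat.zero_le _
  · rw [BHR_eq_sSup]
    exact le_csSup (bddAbove_index q x) ⟨hr, h⟩

lemma BHR_le_count (q : ℝ) {m : ℕ} (x : Fin m → ℝ) :
    BHR q x ≤ count x (q * BHR q x / m) := by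
  rcases Set.eq_empty_or_nonempty {r : ℕ | 1 ≤ r ∧ r ≤ count x (q * r / m)} with h | h
  · have : BHR q x = 0 := by rw [BHR_eq_sSup, h]; simp
    omega
  · have := Nat.sSup_mem h (bddAbove_index q x)
    rw [← BHR_eq_sSup] at this
    exact this.2

/-- `R` is a fixed point of `r ↦ #{i | x i ≤ q r / m}`. -/
lemma count_threshold {q : ℝ} (hq : 0 ≤ q) {m : ℕ} (x : Fin m → ℝ) :
    count x (q * BHR q x / m) = BHR q x := by
  refine le_antisymm (le_BHR q x ?_) (BHR_le_count q x)
  refine card_le_card fun i hi => ?_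
  simp only [mem_filter, mem_univ, true_and] at hi ⊢
  refine hi.trans ?_
  gcongr
  exact BHR_le_count q x

/-- `R` as a finite supremum of functions that are visibly measurable in `x`. -/
lemma BHR_eq_sup (q : ℝ) {m : ℕ} (x : Fin m → ℝ) :
    BHR q x = (range (m + 1)).sup fun r => if r ≤ count x (q * r / m) then r else 0 := by
  apply le_antisymm
  · have h := BHR_le_count q x
    have hm : BHR q x ∈ range (m + 1) := by
      have := count_le x (q * BHR q x / m)
      simp only [mem_range]
      omega
    have := le_sup (f := fun r : ℕ => if r ≤ count x (q * r / m) then r else 0) hm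
    simpa only [if_pos h] using this
  · refine Finset.sup_le fun r _ => ?_
    split_ifs with h
    · exact le_BHR q x h
    · exact Nat.zero_le _

/-! ### Measurability -/

lemma measurable_count {m : ℕ} (t : ℝ) : Measurable fun x : Fin m → ℝ => count x t := by
  simp only [count, card_filter]
  exact Finset.measurable_sum _ fun i _ =>
    Measurable.ite (measurableSet_le (measurable_pi_apply i) measurable_const)
      measurable_const measurable_const

lemma measurable_BHR (q : ℝ) {m : ℕ} : Measurable fun x : Fin m → ℝ => BHR q x := by
  simp only [BHR_eq_sup]
  induction range (m + 1) using Finset.induction_on with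
  | empty => simp
  | insert r s _ ih =>
    simp only [sup_insert]
    exact (Measurable.ite (measurableSet_le measurable_const (measurable_count _))
      measurable_const measurable_const).sup ih

lemma measurable_cast_BHR (q : ℝ) {m : ℕ} :
    Measurable fun x : Fin m → ℝ => (BHR q x : ℝ) :=
  measurable_from_top.comp (measurable_BHR q)

lemma measurable_BHS (q : ℝ) {m : ℕ} (m0 : ℕ) : Measurable fun x : Fin m → ℝ => BHS q m0 x := by
  simp only [BHS, card_filter]
  refine Finset.measurable_sum _ fun i _ => Measurable.ite ?_ measurable_const measurable_const
  exact (MeasurableSet.const _).inter (measurableSet_le (measurable_pi_apply i)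
    (((measurable_cast_BHR q).const_mul q).div_const _))

lemma measurable_Pi1 (q : ℝ) {m : ℕ} (m0 : ℕ) : Measurable fun x : Fin m → ℝ => Pi1 q m0 x := by
  unfold Pi1
  exact (measurable_from_top.comp (measurable_BHS q m0)).div
    ((measurable_from_top (f := fun n : ℕ => ((max n 1 : ℕ) : ℝ))).comp (measurable_BHR q))

lemma measurable_Pi3 (q : ℝ) {m : ℕ} (m0 : ℕ) : Measurable fun x : Fin m → ℝ => Pi3 q m0 x := by
  unfold Pi3
  exact (((measurable_from_top (f := fun n : ℕ => (n : ℝ))).comp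
    (measurable_BHS q m0)).const_sub _).div
    ((measurable_from_top (f := fun n : ℕ => ((max (m - n) 1 : ℕ) : ℝ))).comp
      (measurable_BHR q)) |>.const_sub _

/-! ### Bounds on `S`, `Π₁` and `Π₃` -/

lemma BHS_le_BHR {q : ℝ} (hq : 0 ≤ q) {m : ℕ} (m0 : ℕ) (x : Fin m → ℝ) :
    BHS q m0 x ≤ BHR q x := by
  conv_rhs => rw [← count_threshold hq x]
  exact card_le_card fun i hi => by
    simp only [mem_filter, mem_univ, true_and] at hi ⊢
    exact hi.2

lemma card_first {m m0 : ℕ} (hm0 : m0 ≤ m) :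
    (univ.filter fun i : Fin m => i.1 < m0).card = m0 := by
  simp [Fin.card_filter_val_lt, hm0]

lemma BHS_le {q : ℝ} {m m0 : ℕ} (hm0 : m0 ≤ m) (x : Fin m → ℝ) : BHS q m0 x ≤ m0 := by
  conv_rhs => rw [← card_first hm0]
  exact card_le_card fun i hi => by
    simp only [mem_filter, mem_univ, true_and] at hi ⊢
    exact hi.1

/-- At most `m - m₀` of the rejected observations are outside the first `m₀`. Equivalently, there
are at most as many unrejected ones among the first `m₀` as there are altogether. -/
lemma BHR_add_le {q : ℝ} (hq : 0 ≤ q) {m m0 : ℕ} (hm0 : m0 ≤ m) (x : Fin m → ℝ) :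
    BHR q x + m0 ≤ m + BHS q m0 x := by
  have h := card_union_add_card_inter (univ.filter fun i : Fin m => i.1 < m0)
    (univ.filter fun i : Fin m => x i ≤ q * BHR q x / m)
  rw [← filter_and, card_first hm0] at h
  have hR : (univ.filter fun i : Fin m => x i ≤ q * BHR q x / m).card = BHR q x :=
    count_threshold hq x
  have hU := card_le_univ ((univ.filter fun i : Fin m => i.1 < m0) ∪
    (univ.filter fun i : Fin m => x i ≤ q * BHR q x / m))
  rw [Fintype.card_fin] at hU
  have hS : (univ.filter fun i : Fin m => i.1 < m0 ∧ x i ≤ q * BHR q x / m).card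
    = BHS q m0 x := rfl
  omega

lemma BHR_le {q : ℝ} {m : ℕ} (x : Fin m → ℝ) : BHR q x ≤ m :=
  (BHR_le_count q x).trans (count_le _ _)

lemma Pi1_nonneg (q : ℝ) {m : ℕ} (m0 : ℕ) (x : Fin m → ℝ) : 0 ≤ Pi1 q m0 x := by
  unfold Pi1
  positivity

lemma Pi1_le_one {q : ℝ} (hq : 0 ≤ q) {m : ℕ} (m0 : ℕ) (x : Fin m → ℝ) : Pi1 q m0 x ≤ 1 := by
  unfold Pi1
  refine div_le_one_of_le₀ ?_ (Nat.cast_nonneg _)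
  exact_mod_cast (BHS_le_BHR hq m0 x).trans (le_max_left _ _)

lemma Pi3_le_one {q : ℝ} {m m0 : ℕ} (hm0 : m0 ≤ m) (x : Fin m → ℝ) : Pi3 q m0 x ≤ 1 := by
  have : (BHS q m0 x : ℝ) ≤ m0 := by exact_mod_cast BHS_le hm0 x
  exact sub_le_self _ (div_nonneg (sub_nonneg.2 this) (Nat.cast_nonneg _))

lemma Pi3_nonneg {q : ℝ} (hq : 0 ≤ q) {m m0 : ℕ} (hm0 : m0 ≤ m) (x : Fin m → ℝ) :
    0 ≤ Pi3 q m0 x := by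
  refine sub_nonneg.2 (div_le_one_of_le₀ ?_ (Nat.cast_nonneg _))
  have h1 := BHR_add_le hq hm0 x
  have h2 : m0 ≤ max (m - BHR q x) 1 + BHS q m0 x := by omega
  have : (m0 : ℝ) ≤ (max (m - BHR q x) 1 : ℕ) + BHS q m0 x := by exact_mod_cast h2
  linarith

lemma Pi3_le_of_Pi1_lt {q : ℝ} (hq : 0 ≤ q) {m m0 : ℕ} (hm : 1 ≤ m) (hm0 : m0 ≤ m)
    (x : Fin m → ℝ) (h : Pi1 q m0 x < (m0 : ℝ) / m) : Pi3 q m0 x ≤ 1 - (m0 : ℝ) / m := by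
  have h1 := BHR_add_le hq hm0 x
  have h2 := BHR_le (q := q) x
  have h3 := BHS_le_BHR hq m0 x
  have h4 := BHS_le (q := q) hm0 x
  unfold Pi1 at h
  unfold Pi3
  generalize BHR q x = R at *
  generalize BHS q m0 x = S at *
  have hmR : (0 : ℝ) < m := by exact_mod_cast hm
  rw [div_lt_div_iff₀ (by positivity) hmR] at h
  norm_cast at h
  refine sub_le_sub_left ?_ _
  rw [div_le_div_iff₀ hmR (by positivity)]
  rw [← Nat.cast_sub h4]
  norm_cast
  -- `R = m` would force `S = m₀`, that is `Π₁ = γ`.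
  have hR : R < m := by
    rcases h2.lt_or_eq with h2 | rfl
    · exact h2
    · have : S = m0 := by omega
      rw [this, max_eq_left hm] at h
      omega
  rw [max_eq_left (by omega : 1 ≤ m - R)]
  have hSR : S * m ≤ m0 * R := by
    rcases Nat.eq_zero_or_pos R with rfl | hp
    · have : S = 0 := by omega
      simp [this]
    · rw [max_eq_left hp] at h
      exact h.le
  zify [h4, h2]
  zify at hSR
  linarith

/-! ### The moment inequality -/

/-- The inequality for each realization, before taking expectations. -/
lemma pointwise {q : ℝ} (hq : 0 ≤ q) {m m0 : ℕ} (hm : 1 ≤ m) (hm0 : m0 ≤ m) (hm0' : 1 ≤ m0)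
    (x : Fin m → ℝ) (k l : ℕ) :
    Pi3 q m0 x ^ l ≤ (1 - (m0 : ℝ) / m) ^ l + Pi1 q m0 x ^ k / ((m0 : ℝ) / m) ^ k := by
  have hγ : (0 : ℝ) < (m0 : ℝ) / m := by positivity
  have hγ1 : (m0 : ℝ) / m ≤ 1 :=
    div_le_one_of_le₀ (by exact_mod_cast hm0) (Nat.cast_nonneg _)
  have h3 := Pi3_nonneg hq hm0 x
  have h1 := Pi1_nonneg q m0 x
  rcases lt_or_ge (Pi1 q m0 x) ((m0 : ℝ) / m) with h | h
  · have := pow_le_pow_left₀ h3 (Pi3_le_of_Pi1_lt hq hm hm0 x h) l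
    have : 0 ≤ Pi1 q m0 x ^ k / ((m0 : ℝ) / m) ^ k := by positivity
    linarith
  · have ha : Pi3 q m0 x ^ l ≤ 1 := pow_le_one₀ h3 (Pi3_le_one hm0 x)
    have hb : 1 ≤ Pi1 q m0 x ^ k / ((m0 : ℝ) / m) ^ k := by
      rw [one_le_div (by positivity)]
      exact pow_le_pow_left₀ hγ.le h k
    have hc : 0 ≤ (1 - (m0 : ℝ) / m) ^ l := pow_nonneg (by linarith) l
    linarith

/-- Powers of a measurable `[0,1]`-valued statistic are integrable. -/
lemma integrable_pow {Ω : Type*} [MeasureSpace Ω] [IsProbabilityMeasure (ℙ : Measure Ω)]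
    {f : Ω → ℝ} (hf : Measurable f) (h0 : ∀ ω, 0 ≤ f ω) (h1 : ∀ ω, f ω ≤ 1) (n : ℕ) :
    Integrable (fun ω => f ω ^ n) (ℙ : Measure Ω) := by
  refine Integrable.of_bound (hf.pow_const n).aestronglyMeasurable 1 (ae_of_all _ fun ω => ?_)
  rw [Real.norm_of_nonneg (pow_nonneg (h0 ω) n)]
  exact pow_le_one₀ (h0 ω) (h1 ω)

end BHMoment

/-- Proposition 2.3, (2.5): for arbitrary `[0,1]`-valued random variables,
`E[(Π_{3,m})^l] ≤ (1-γ)^l + E[(Π_{1,m})^k]/γ^k`, where `γ = m₀/m ∈ (0,1]`. -/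
theorem bh_Pi3_moment_bound
    {Ω : Type*} [MeasureSpace Ω] [IsProbabilityMeasure (ℙ : Measure Ω)]
    (q : ℝ) (hq : q ∈ Set.Icc (0 : ℝ) 1) (m m0 : ℕ) (hm : 1 ≤ m) (hm0 : m0 ≤ m)
    (hm0' : 1 ≤ m0)
    (X : Fin m → Ω → ℝ)
    (hmeas : ∀ i, Measurable (X i))
    (hrange : ∀ i ω, X i ω ∈ Set.Icc (0 : ℝ) 1)
    (k l : ℕ) (hk : 1 ≤ k) (hl : 1 ≤ l) :
    ∫ ω, (Pi3 q m0 (fun i => X i ω)) ^ l ∂ℙ ≤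
      (1 - (m0 : ℝ) / m) ^ l +
        (∫ ω, (Pi1 q m0 (fun i => X i ω)) ^ k ∂ℙ) / ((m0 : ℝ) / m) ^ k := by
  have hX : Measurable fun ω => fun i => X i ω := measurable_pi_lambda _ hmeas
  have i3 := BHMoment.integrable_pow ((BHMoment.measurable_Pi3 q m0).comp hX)
    (fun _ => BHMoment.Pi3_nonneg hq.1 hm0 _) (fun _ => BHMoment.Pi3_le_one hm0 _) l
  have i1 := BHMoment.integrable_pow ((BHMoment.measurable_Pi1 q m0).comp hX)
    (fun _ => BHMoment.Pi1_nonneg q m0 _) (fun _ => BHMoment.Pi1_le_one hq.1 m0 _) k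
  simp only [Function.comp_apply] at i3 i1
  calc ∫ ω, (Pi3 q m0 (fun i => X i ω)) ^ l ∂ℙ
      ≤ ∫ ω, ((1 - (m0 : ℝ) / m) ^ l +
          (Pi1 q m0 (fun i => X i ω)) ^ k / ((m0 : ℝ) / m) ^ k) ∂ℙ :=
        integral_mono i3 ((integrable_const _).add (i1.div_const _)) fun _ =>
          BHMoment.pointwise hq.1 hm hm0 hm0' _ k l
    _ = _ := by
        rw [integral_add (integrable_const _) (i1.div_const _), integral_div]
        simp
end

section
/- Fix q ∈ (0,1], m ∈ ℕ, and let X₁,…,X_m be any values in [0,1] with order statistics X_{1:m} ≤ ⋯ ≤ X_{m:m} and empirical distribution function H_m. With R_m = max{i : X_{i:m} ≤ q·i/m} (and R_m = 0 if no such i exists), for every r ∈ {1,…,m}: R_m ≥ r if and only if H_m(q·k/m) ≥ k/m for some k ∈ {r,…,m}, which holds if and only if max over t ∈ {q·r/m, q·(r+1)/m, …, q·(m−1)/m, q} of (H_m(t) − t)/t is ≥ (1−q)/q. -/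
/-!
Sorting does not change the number of values below a threshold, so `X_{k:m} ≤ t` holds exactly when
at least `k` of the values are `≤ t`, that is, when `k/m ≤ H_m(t)` (`orderStat_le_iff`). Taking
`t = q k/m`, the set whose maximum is `R_m` becomes `{k ∈ {1,…,m} : k/m ≤ H_m(q k/m)}`
(`BHR_set_iff`). A finite set of naturals has maximum at least `r ≥ 1` iff it contains some `k ≥ r`,
which is the first equivalence. For the second, dividing `k/m ≤ H_m(t)` by `t = q k/m > 0` and
subtracting `1` gives `(1-q)/q ≤ (H_m(t) - t)/t`, and a finite maximum is at least a given number
iff one of its terms is.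
-/

open MeasureTheory ProbabilityTheory Filter Finset Topology

/-- The `k`-th order statistic is at most `t` iff the empirical distribution function at `t` is at
least `k/m`. -/
lemma orderStat_le_iff {m : ℕ} (x : Fin m → ℝ) (t : ℝ) (k : ℕ) (hk : 1 ≤ k) (hi : k - 1 < m) :
    orderStat x ⟨k - 1, hi⟩ ≤ t ↔ (k : ℝ) / m ≤ ecdfAll x t := by
  have hm : (0 : ℝ) < m := by exact_mod_cast (by omega : 0 < m)
  have hcard : (univ.filter fun i : Fin m => orderStat x i ≤ t).card
      = (univ.filter fun i : Fin m => x i ≤ t).card :=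
    Finset.card_equiv (Tuple.sort x) fun i => by
      simp only [Finset.mem_filter, Finset.mem_univ, true_and]
      rfl
  have hmono : Monotone (orderStat x) := Tuple.monotone_sort x
  rw [ecdfAll, div_le_div_iff_of_pos_right hm, Nat.cast_le, ← hcard]
  have h := Tuple.lt_card_le_iff_apply_le_of_monotone (j := ⟨k - 1, hi⟩) (a := t) hmono
  rw [← h]
  simp only
  omega

/-- The indices over which the maximum `R_m` is taken, described through the empirical
distribution function. -/
lemma BHR_set_iff (q : ℝ) {m : ℕ} (x : Fin m → ℝ) (k : ℕ) :
    (∃ hi : k - 1 < m, 1 ≤ k ∧ orderStat x ⟨k - 1, hi⟩ ≤ q * (k + (0 : ℕ)) / m) ↔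
      1 ≤ k ∧ k ≤ m ∧ (k : ℝ) / m ≤ ecdfAll x (q * k / m) := by
  constructor
  · rintro ⟨hi, hk, h⟩
    rw [orderStat_le_iff x _ k hk hi, Nat.cast_zero, add_zero] at h
    exact ⟨hk, by omega, h⟩
  · rintro ⟨hk, hkm, h⟩
    have hi : k - 1 < m := by omega
    refine ⟨hi, hk, ?_⟩
    rw [orderStat_le_iff x _ k hk hi, Nat.cast_zero, add_zero]
    exact h

/-- Identity (1.2): `R_m ≥ r` iff `H_m(qk/m) ≥ k/m` for some `k ∈ {r,…,m}`, iff the maximum of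
`(H_m(t) - t)/t` over `t ∈ {qr/m, …, q(m-1)/m, q}` is at least `(1-q)/q`. -/
theorem bh_goodness_of_fit_identity
    (q : ℝ) (hq : q ∈ Set.Ioc (0 : ℝ) 1) (m : ℕ) (hm : 1 ≤ m)
    (x : Fin m → ℝ) (hrange : ∀ i, x i ∈ Set.Icc (0 : ℝ) 1)
    (r : ℕ) (hr : 1 ≤ r) (hrm : r ≤ m) :
    (r ≤ BHR q x ↔ ∃ k ∈ Finset.Icc r m, (k : ℝ) / m ≤ ecdfAll x (q * k / m)) ∧
      ((∃ k ∈ Finset.Icc r m, (k : ℝ) / m ≤ ecdfAll x (q * k / m)) ↔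
        (1 - q) / q ≤ (Finset.Icc r m).sup' (Finset.nonempty_Icc.mpr hrm)
          (fun k => (ecdfAll x (q * k / m) - q * k / m) / (q * k / m))) := by
  constructor
  · have hset : BHR q x =
        sSup {k : ℕ | 1 ≤ k ∧ k ≤ m ∧ (k : ℝ) / m ≤ ecdfAll x (q * k / m)} := by
      unfold BHR BHRmod
      congr 1
      ext k
      exact BHR_set_iff q x k
    have hbdd : BddAbove {k : ℕ | 1 ≤ k ∧ k ≤ m ∧ (k : ℝ) / m ≤ ecdfAll x (q * k / m)} :=
      ⟨m, fun k hk => hk.2.1⟩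
    rw [hset]
    constructor
    · intro h
      -- The supremum of the empty set is `0 < r`, so the set is nonempty and attains its supremum.
      have hne : {k : ℕ | 1 ≤ k ∧ k ≤ m ∧ (k : ℝ) / m ≤ ecdfAll x (q * k / m)}.Nonempty := by
        by_contra hne
        rw [Set.not_nonempty_iff_eq_empty] at hne
        rw [hne, csSup_empty, Nat.bot_eq_zero] at h
        omega
      obtain ⟨-, h2, h3⟩ := Nat.sSup_mem hne hbdd
      exact ⟨_, Finset.mem_Icc.mpr ⟨h, h2⟩, h3⟩
    · rintro ⟨k, hk, h⟩
      rw [Finset.mem_Icc] at hk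
      exact hk.1.trans (le_csSup hbdd ⟨hr.trans hk.1, hk.2, h⟩)
  · rw [Finset.le_sup'_iff]
    refine exists_congr fun k => and_congr_right fun hk => ?_
    rw [Finset.mem_Icc] at hk
    have hq0 : 0 < q := hq.1
    have hm0 : (0 : ℝ) < m := by exact_mod_cast hm
    have hk0 : (0 : ℝ) < k := by exact_mod_cast hr.trans hk.1
    have ht : 0 < q * k / m := by positivity
    have hscale : (1 - q) / q * (q * k / m) = k / m - q * k / m := by
      field_simp
    rw [le_div_iff₀ ht, hscale, sub_le_sub_iff_right]
end

section
/- Fix q ∈ (0,1) and γ ∈ (0,1] and a fixed j ∈ ℕ. Consider a sequence of problems indexed by m → ∞ with m₀ = γm (so m₀ ≥ j eventually). If R_m → ∞ in probability, then R_m^{(j)}(X^{(j)}) → ∞ in probability. -/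
/-!
Removing the first `j` coordinates costs at most `j` rejections: pointwise, `R_m ≤ R_m^{(j)} + j`.
Indeed, with `R = R_m > j` and `t = q R / m`, at least `R` coordinates of `x` are `≤ t`
(`orderStat_le_iff`), hence at least `R - j` of the last `m - j` ones are (`card_le_card_tail_add`).
So the `(R - j)`-th order statistic of the tail is at most `t = q ((R - j) + j) / m`, that is, the
index `R - j` is admissible for the modified procedure. Consequently
`{R_m^{(j)} ≤ C} ⊆ {R_m ≤ C + j}`, and the probability of the latter event tends to `0`.
-/

open MeasureTheory ProbabilityTheory Filter Finset Topology

/-- The `(k+1)`-th order statistic is at most `t` iff more than `k` coordinates are at most `t`. -/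
lemma orderStat_le_iff_s17 {n : ℕ} (x : Fin n → ℝ) (k : Fin n) (t : ℝ) :
    orderStat x k ≤ t ↔ k.1 < (univ.filter fun i => x i ≤ t).card := by
  have h := Tuple.lt_card_le_iff_apply_le_of_monotone
    (j := k) (f := orderStat x) (a := t) (Tuple.monotone_sort x)
  rw [← h]
  have hc : (univ.filter fun i => orderStat x i ≤ t).card =
      (univ.filter fun i => x i ≤ t).card :=
    Finset.card_equiv (Tuple.sort x) fun i => by
      rw [mem_filter, mem_filter]; simp only [mem_univ, true_and, orderStat, Function.comp_apply]
  rw [hc]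

lemma card_le_card_tail_add {m : ℕ} (j : ℕ) (x : Fin m → ℝ) (t : ℝ) :
    (univ.filter fun i => x i ≤ t).card ≤
      (univ.filter fun i => tailTuple j x i ≤ t).card + j := by
  classical
  set A := univ.filter fun i => x i ≤ t
  rw [← Finset.card_filter_add_card_filter_not (s := A) (fun i => j ≤ i.1)]
  refine add_le_add ?_ ?_
  · refine Finset.card_le_card_of_surjOn
      (fun i : Fin (m - j) => (⟨j + i.1, by have := i.2; omega⟩ : Fin m)) ?_
    intro i hi
    obtain ⟨hiA, hij⟩ := mem_filter.1 (mem_coe.1 hi)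
    have hit : x i ≤ t := (mem_filter.1 hiA).2
    have hji : j + (i.1 - j) = i.1 := by omega
    refine ⟨⟨i.1 - j, by have := i.2; omega⟩, ?_, Fin.ext hji⟩
    exact mem_coe.2 (mem_filter.2 ⟨mem_univ _, by simpa only [tailTuple, hji] using hit⟩)
  · calc (A.filter fun i => ¬ j ≤ i.1).card ≤ (Finset.range j).card :=
          Finset.card_le_card_of_injOn (fun i => i.1)
            (fun i hi => by simpa using (mem_filter.1 hi).2) (Fin.val_injective.injOn)
      _ = j := Finset.card_range j

lemma bddAbove_BHRmod_set (q : ℝ) (m j : ℕ) {n : ℕ} (x : Fin n → ℝ) :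
    BddAbove {i : ℕ | ∃ hi : i - 1 < n, 1 ≤ i ∧ orderStat x ⟨i - 1, hi⟩ ≤ q * (i + j) / m} :=
  ⟨n, fun i ⟨hi, _, _⟩ => by omega⟩

/-- Deleting the first `j` coordinates, and shifting the thresholds by `j`, loses at most `j`
rejections. -/
lemma BHR_le_BHRj_add (q : ℝ) {m : ℕ} (j : ℕ) (x : Fin m → ℝ) : BHR q x ≤ BHRj q j x + j := by
  by_contra! hlt
  have hne : {i : ℕ | ∃ hi : i - 1 < m, 1 ≤ i ∧
      orderStat x ⟨i - 1, hi⟩ ≤ q * (i + (0 : ℕ)) / m}.Nonempty := by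
    by_contra hemp
    rw [Set.not_nonempty_iff_eq_empty] at hemp
    have h0 : BHR q x = 0 := by rw [BHR, BHRmod, hemp, csSup_empty]; rfl
    omega
  obtain ⟨hi, h1, hle⟩ := Nat.sSup_mem hne (bddAbove_BHRmod_set q m 0 x)
  change BHR q x - 1 < m at hi
  change orderStat x ⟨BHR q x - 1, hi⟩ ≤ q * ((BHR q x : ℕ) + (0 : ℕ)) / m at hle
  generalize BHR q x = R at *
  have hj : j < R := by omega
  have hmem : R - j ≤ BHRj q j x := by
    refine le_csSup (bddAbove_BHRmod_set q m j (tailTuple j x)) ⟨by omega, by omega, ?_⟩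
    have hcard := (orderStat_le_iff_s17 x _ _).1 hle
    have htail := card_le_card_tail_add j x (q * ((R : ℝ) + (0 : ℕ)) / m)
    have hR : (((R - j : ℕ) : ℝ) + j) = (R : ℝ) + (0 : ℕ) := by
      rw [Nat.cast_sub hj.le]; simp
    rw [hR, orderStat_le_iff_s17]
    dsimp only at hcard ⊢
    omega
  omega

/-- From the Appendix (proof of Proposition 2.2): if `R_m → ∞` in probability then
`R_m^{(j)}(X^{(j)}) → ∞` in probability. -/
theorem bh_Rj_tendsto_atTop
    {Ω : Type*} [MeasureSpace Ω] [IsProbabilityMeasure (ℙ : Measure Ω)]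
    (q γ : ℝ) (hq : q ∈ Set.Ioo (0 : ℝ) 1) (hγ : γ ∈ Set.Ioc (0 : ℝ) 1)
    (j : ℕ)
    (m0 : ℕ → ℕ) (hm0 : ∀ m, m0 m ≤ m) (hγm : ∀ m, (m0 m : ℝ) = γ * m)
    (X : (m : ℕ) → Fin m → Ω → ℝ)
    (hmeas : ∀ m i, Measurable (X m i))
    (hrange : ∀ m i ω, X m i ω ∈ Set.Icc (0 : ℝ) 1)
    (hR : TendstoInProbAtTop (fun m ω => BHR q (fun i => X m i ω))) :
    TendstoInProbAtTop (fun m ω => BHRj q j (fun i => X m i ω)) := by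
  intro C
  refine tendsto_of_tendsto_of_tendsto_of_le_of_le tendsto_const_nhds (hR (C + j))
    (fun _ => zero_le) (fun m => measure_mono fun ω hω => ?_)
  exact (BHR_le_BHRj_add q j _).trans (Nat.add_le_add_right hω j)
end
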